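/- arXiv:1210.8390 — 2 statements merged into one kernel-verified Lean document; each statement's English description precedes it below -/
import Mathlib

section
/- (Zykov's theorem) Let n and r be positive integers and let G be a finite simple graph on n vertices whose clique number is at most r. Then for every k ≥ 1, the number of k-cliques of G is at most the number of k-cliques of the Turán graph T(n,r): c_k(G) ≤ t_k(n,r). -/
/-- The number of `k`-cliques of a graph `G`. -/
noncomputable def cliqueCount {V : Type*} (G : SimpleGraph V) (k : ℕ) : ℕ :=
  {s : Finset V | G.IsNClique k s}.ncard

/-- `t_k(n,r)`: the number of `k`-cliques of the Turán graph `T(n,r)`. -/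
noncomputable def turanCount (n r k : ℕ) : ℕ :=
  cliqueCount (SimpleGraph.turanGraph n r) k

/-!
Among the vertices of `G`, choose `v` lying in the most `(k + 1)`-cliques. A `(k + 1)`-clique
either lies inside the neighbourhood `N(v)` or contains some non-neighbour `u` of `v`, and there are
at most as many cliques through `u` as through `v`. So `c_{k+1}(G)` is at most
`c_{k+1}(N(v)) + |V \ N(v)| * c_k(N(v))`. Since `N(v)` has no `r`-clique, induction on `r` bounds
this by the number of `(k + 1)`-cliques of a complete `r`-partite graph one of whose parts is
`V \ N(v)`. That number is the elementary symmetric polynomial of degree `k + 1` in the part sizes,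
and bringing two of them one step closer together keeps the sum and does not decrease the
polynomial, so the balanced sizes of the Turán graph are optimal.
-/

open Finset

section Esymm

variable {R : Type*} [CommSemiring R]

theorem multiset_esymm_zero (s : Multiset R) : s.esymm 0 = 1 := by
  simp [Multiset.esymm]

theorem multiset_zero_esymm_succ (k : ℕ) : (0 : Multiset R).esymm (k + 1) = 0 := by
  simp [Multiset.esymm, Multiset.powersetCard_zero_right]

theorem multiset_esymm_cons_succ (a : R) (s : Multiset R) (k : ℕ) :
    (a ::ₘ s).esymm (k + 1) = s.esymm (k + 1) + a * s.esymm k := by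
  simp [Multiset.esymm, Multiset.powersetCard_cons, Multiset.sum_map_mul_left]

theorem multiset_esymm_cons_cons_le [PartialOrder R] [IsOrderedRing R] [CanonicallyOrderedAdd R]
    {a b c d : R} (hadd : a + b = c + d) (hmul : a * b ≤ c * d) (s : Multiset R) (k : ℕ) :
    (a ::ₘ b ::ₘ s).esymm k ≤ (c ::ₘ d ::ₘ s).esymm k := by
  have esymm_succ_succ (x y : R) (k : ℕ) : (x ::ₘ y ::ₘ s).esymm (k + 2) =
      s.esymm (k + 2) + (x + y) * s.esymm (k + 1) + x * y * s.esymm k := by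
    simp only [multiset_esymm_cons_succ]
    ring
  match k with
  | 0 => simp [multiset_esymm_zero]
  | 1 =>
    simp only [multiset_esymm_cons_succ, multiset_esymm_zero, mul_one, zero_add, add_assoc]
    rw [add_comm b a, add_comm d c, hadd]
  | k + 2 =>
    rw [esymm_succ_succ, esymm_succ_succ, hadd]
    gcongr

end Esymm

section Balanced

variable {s t : Multiset ℕ}

/-- A multiset of natural numbers is balanced if its elements pairwise differ by at most one, as
the part sizes of a Turán graph do. -/
def IsBalanced (s : Multiset ℕ) : Prop :=
  Set.EquitableOn {x | x ∈ s} id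

theorem IsBalanced.eq_div_or_eq_div_add_one (hs : IsBalanced s) :
    ∀ x ∈ s, x = s.sum / s.card ∨ x = s.sum / s.card + 1 := by
  have hequitable : Set.EquitableOn ((univ : Finset s) : Set s) (fun x ↦ (x : ℕ)) :=
    fun x y _ _ ↦ hs (Multiset.coe_mem (x := x)) (Multiset.coe_mem (x := y))
  have hsum : ∑ x : s, (x : ℕ) = s.sum := congrArg Multiset.sum s.map_univ_coe
  rw [equitableOn_iff, hsum, card_univ, Multiset.card_coe] at hequitable
  intro x hx
  exact hequitable (s.mkToType x ⟨0, Multiset.count_pos.2 hx⟩) (mem_univ _)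

theorem count_add_count_succ_eq_card {q : ℕ} (h : ∀ x ∈ s, x = q ∨ x = q + 1) :
    s.count q + s.count (q + 1) = s.card := by
  induction s using Multiset.induction_on with
  | empty => simp
  | cons a s ih =>
    simp only [Multiset.forall_mem_cons] at h
    have := ih h.2
    rcases h.1 with rfl | rfl <;> simp <;> omega

theorem mul_card_add_count_succ_eq_sum {q : ℕ} (h : ∀ x ∈ s, x = q ∨ x = q + 1) :
    q * s.card + s.count (q + 1) = s.sum := by
  induction s using Multiset.induction_on with
  | empty => simp
  | cons a s ih =>
    simp only [Multiset.forall_mem_cons] at h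
    have := ih h.2
    rcases h.1 with rfl | rfl <;> simp [mul_add] <;> omega

theorem IsBalanced.eq_of_card_eq_of_sum_eq (hs : IsBalanced s) (ht : IsBalanced t)
    (hcard : s.card = t.card) (hsum : s.sum = t.sum) : s = t := by
  have hs' := hs.eq_div_or_eq_div_add_one
  have ht' := ht.eq_div_or_eq_div_add_one
  rw [hcard, hsum] at hs'
  set q := t.sum / t.card
  have hcount_succ : s.count (q + 1) = t.count (q + 1) := by
    have := mul_card_add_count_succ_eq_sum hs'
    have := mul_card_add_count_succ_eq_sum ht'
    grind
  have hcount : s.count q = t.count q := by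
    have := count_add_count_succ_eq_card hs'
    have := count_add_count_succ_eq_card ht'
    omega
  ext x
  by_cases hx : x = q ∨ x = q + 1
  · rcases hx with rfl | rfl <;> assumption
  · rw [Multiset.count_eq_zero_of_notMem (mt (hs' x) hx),
      Multiset.count_eq_zero_of_notMem (mt (ht' x) hx)]

theorem exists_cons_cons_of_not_isBalanced (hs : ¬IsBalanced s) :
    ∃ x y u, x + 1 < y ∧ s = x ::ₘ y ::ₘ u := by
  obtain ⟨y, hy, x, hx, hxy : x + 1 < y⟩ := Set.not_equitableOn.1 hs
  obtain ⟨t, rfl⟩ := Multiset.exists_cons_of_mem hx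
  obtain ⟨u, rfl⟩ := Multiset.exists_cons_of_mem ((Multiset.mem_cons.1 hy).resolve_left (by omega))
  exact ⟨x, y, u, hxy, rfl⟩

theorem IsBalanced.esymm_le (ht : IsBalanced t) (hcard : s.card = t.card) (hsum : s.sum = t.sum)
    (k : ℕ) : s.esymm k ≤ t.esymm k := by
  -- Moving two entries towards each other decreases the sum of squares.
  induction hN : (s.map (· ^ 2)).sum using Nat.strong_induction_on generalizing s with
  | _ N ih =>
    by_cases hs : IsBalanced s
    · rw [hs.eq_of_card_eq_of_sum_eq ht hcard hsum]
    · obtain ⟨x, y, u, hxy, rfl⟩ := exists_cons_cons_of_not_isBalanced hs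
      obtain ⟨d, rfl⟩ := Nat.exists_eq_add_of_lt hxy
      simp only [Multiset.card_cons, Multiset.sum_cons, Multiset.map_cons] at hcard hsum hN
      calc (x ::ₘ (x + 1 + d + 1) ::ₘ u).esymm k
        _ ≤ ((x + 1) ::ₘ (x + 1 + d) ::ₘ u).esymm k :=
          multiset_esymm_cons_cons_le (by ring) (by nlinarith) u k
        _ ≤ t.esymm k := by
          refine ih _ ?_ (by simpa using hcard) (by simp only [Multiset.sum_cons]; omega) rfl
          simp only [Multiset.map_cons, Multiset.sum_cons]
          nlinarith

end Balanced

section CliqueFinsetOn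

variable {V : Type*} [DecidableEq V] (G : SimpleGraph V) [DecidableRel G.Adj]

/-- The `k`-cliques of `G` all of whose vertices lie in `A`; compare `SimpleGraph.cliqueFinset` and
`SimpleGraph.CliqueFreeOn`. -/
def cliqueFinsetOn (A : Finset V) (k : ℕ) : Finset (Finset V) :=
  {s ∈ A.powerset | G.IsNClique k s}

variable {G} {A B : Finset V}

theorem mem_cliqueFinsetOn {k : ℕ} {s : Finset V} :
    s ∈ cliqueFinsetOn G A k ↔ s ⊆ A ∧ G.IsNClique k s := by
  simp [cliqueFinsetOn]

theorem card_cliqueFinsetOn_zero : #(cliqueFinsetOn G A 0) = 1 := by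
  refine card_eq_one.2 ⟨∅, ?_⟩
  ext s
  simp +contextual [mem_cliqueFinsetOn]

theorem cliqueFinsetOn_empty_succ (k : ℕ) : cliqueFinsetOn G ∅ (k + 1) = ∅ := by
  ext s
  simp +contextual [mem_cliqueFinsetOn, SimpleGraph.isNClique_iff]

theorem card_cliqueFinsetOn_empty (k : ℕ) :
    #(cliqueFinsetOn G ∅ k) = (0 : Multiset ℕ).esymm k := by
  cases k with
  | zero => rw [card_cliqueFinsetOn_zero, multiset_esymm_zero]
  | succ k => rw [cliqueFinsetOn_empty_succ, multiset_zero_esymm_succ, card_empty]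

theorem cliqueCount_eq_card_cliqueFinsetOn_univ [Fintype V] (k : ℕ) :
    cliqueCount G k = #(cliqueFinsetOn G univ k) := by
  rw [cliqueCount, ← Set.ncard_coe_finset]
  simp [cliqueFinsetOn]

theorem cliqueFinsetOn_succ (hB : B ⊆ A) (k : ℕ) :
    cliqueFinsetOn G A (k + 1) = cliqueFinsetOn G (A \ B) (k + 1) ∪
      B.biUnion fun u ↦ (cliqueFinsetOn G {w ∈ A | G.Adj u w} k).image (insert u) := by
  ext s
  simp only [mem_union, mem_biUnion, mem_image, mem_cliqueFinsetOn]
  constructor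
  · rintro ⟨hsA, hs⟩
    by_cases hsB : Disjoint s B
    · exact .inl ⟨subset_sdiff.2 ⟨hsA, hsB⟩, hs⟩
    · obtain ⟨u, hus, huB⟩ := not_disjoint_iff.1 hsB
      refine .inr ⟨u, huB, s.erase u, ⟨fun w hw ↦ ?_, hs.erase_of_mem hus⟩, insert_erase hus⟩
      rw [mem_erase] at hw
      exact mem_filter.2 ⟨hsA hw.2, hs.isClique hus hw.2 hw.1.symm⟩
  · rintro (⟨hsAB, hs⟩ | ⟨u, huB, t, ⟨htA, ht⟩, rfl⟩)
    · exact ⟨hsAB.trans sdiff_subset, hs⟩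
    · exact ⟨insert_subset (hB huB) (htA.trans (filter_subset _ _)),
        ht.insert fun w hw ↦ (mem_filter.1 (htA hw)).2⟩

theorem card_cliqueFinsetOn_succ_le (hB : B ⊆ A) (k : ℕ) :
    #(cliqueFinsetOn G A (k + 1)) ≤
      #(cliqueFinsetOn G (A \ B) (k + 1)) + ∑ u ∈ B, #(cliqueFinsetOn G {w ∈ A | G.Adj u w} k) := by
  rw [cliqueFinsetOn_succ hB]
  grw [card_union_le, card_biUnion_le]
  exact Nat.add_le_add_left (sum_le_sum fun _ _ ↦ card_image_le) _

theorem card_cliqueFinsetOn_succ_of_isIndepSet (hB : B ⊆ A) (hindep : G.IsIndepSet (B : Set V))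
    (k : ℕ) :
    #(cliqueFinsetOn G A (k + 1)) =
      #(cliqueFinsetOn G (A \ B) (k + 1)) + ∑ u ∈ B, #(cliqueFinsetOn G {w ∈ A | G.Adj u w} k) := by
  have notMem {u : V} {s : Finset V} (hs : s ∈ cliqueFinsetOn G {w ∈ A | G.Adj u w} k) : u ∉ s :=
    fun hu ↦ by simpa using (mem_cliqueFinsetOn.1 hs).1 hu
  rw [cliqueFinsetOn_succ hB, card_union_of_disjoint, card_biUnion]
  · congr! 2 with u
    exact card_image_of_injOn <| insert_erase_invOn.2.injOn.mono fun s hs ↦ notMem hs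
  · intro u hu v hv huv
    simp only [disjoint_left, mem_image]
    rintro _ ⟨s, hs, rfl⟩ ⟨t, -, hst⟩
    have hvs : v ∈ s := mem_of_mem_insert_of_ne (hst ▸ mem_insert_self v t) (Ne.symm huv)
    exact hindep hu hv huv (mem_filter.1 ((mem_cliqueFinsetOn.1 hs).1 hvs)).2
  · simp only [disjoint_left, mem_biUnion, mem_image]
    rintro s hs ⟨u, hu, t, -, rfl⟩
    exact (mem_sdiff.1 ((mem_cliqueFinsetOn.1 hs).1 (mem_insert_self u t))).2 hu

theorem exists_card_cliqueFinsetOn_succ_le (hA : A.Nonempty) (k : ℕ) :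
    ∃ v ∈ A, #(cliqueFinsetOn G A (k + 1)) ≤
      #(cliqueFinsetOn G {w ∈ A | G.Adj v w} (k + 1)) +
        #{w ∈ A | ¬G.Adj v w} * #(cliqueFinsetOn G {w ∈ A | G.Adj v w} k) := by
  obtain ⟨v, hv, hmax⟩ :=
    exists_max_image A (fun u ↦ #(cliqueFinsetOn G {w ∈ A | G.Adj u w} k)) hA
  refine ⟨v, hv, ?_⟩
  grw [card_cliqueFinsetOn_succ_le (filter_subset (fun w ↦ ¬G.Adj v w) A),
    sum_le_card_nsmul _ _ _ fun u hu ↦ hmax u (mem_filter.1 hu).1]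
  simp [← filter_not]

end CliqueFinsetOn

section CompleteMultipartite

variable {V α : Type*} [DecidableEq V] [DecidableEq α]

theorem card_cliqueFinsetOn_comap_top (c : V → α) (A : Finset V) (T : Finset α) (k : ℕ) :
    #(cliqueFinsetOn ((⊤ : SimpleGraph α).comap c) {v ∈ A | c v ∈ T} k) =
      (T.val.map fun i ↦ #{v ∈ A | c v = i}).esymm k := by
  induction T using Finset.induction_on generalizing k with
  | empty => simp [card_cliqueFinsetOn_empty]
  | insert i T hi ih =>
    cases k with
    | zero => rw [card_cliqueFinsetOn_zero, multiset_esymm_zero]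
    | succ k =>
      set part : Finset V := {v ∈ A | c v = i} with hpart
      have hsub : part ⊆ {v ∈ A | c v ∈ insert i T} := by grind
      have hindep : ((⊤ : SimpleGraph α).comap c).IsIndepSet (part : Set V) := by
        intro u hu v hv _
        simp_all
      have hrest : {v ∈ A | c v ∈ insert i T} \ part = {v ∈ A | c v ∈ T} := by grind
      have hneighbors : ∀ u ∈ part, {w ∈ {v ∈ A | c v ∈ insert i T} |
          ((⊤ : SimpleGraph α).comap c).Adj u w} = {v ∈ A | c v ∈ T} := by
        intro u hu
        ext w
        simp only [SimpleGraph.comap_adj, SimpleGraph.top_adj]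
        grind
      rw [card_cliqueFinsetOn_succ_of_isIndepSet hsub hindep, hrest,
        sum_congr rfl fun u hu ↦ by rw [hneighbors u hu], sum_const, smul_eq_mul, ih, ih,
        insert_val_of_notMem hi, Multiset.map_cons, multiset_esymm_cons_succ]

end CompleteMultipartite

section Turan

/-- The sizes of the `r` parts of the Turán graph `T(n,r)`, some of them zero when `n < r`. -/
def turanPartSizes (n r : ℕ) : Multiset ℕ :=
  (range r).val.map fun i ↦ #{v : Fin n | v % r = i}

variable {n r : ℕ}

theorem card_turanPartSizes : (turanPartSizes n r).card = r := by
  simp [turanPartSizes]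

theorem sum_turanPartSizes (hr : 0 < r) : (turanPartSizes n r).sum = n := by
  have h := card_eq_sum_card_fiberwise (s := (univ : Finset (Fin n))) (t := range r)
    (f := fun v : Fin n ↦ (v : ℕ) % r) fun v _ ↦ by simpa using Nat.mod_lt v hr
  simpa using! h.symm

theorem card_filter_mod_eq {i : ℕ} (hi : i < r) :
    #{v : Fin n | v % r = i} = n / r + if i < n % r then 1 else 0 := by
  have h := Nat.count_modEq_card n (Nat.zero_lt_of_lt hi) i
  simp only [Nat.ModEq, Nat.mod_eq_of_lt hi] at h
  rw [← h, Nat.count_eq_card_filter_range, ← Nat.Iio_eq_range, ← Fin.map_valEmbedding_univ,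
    filter_map, card_map]
  rfl

theorem isBalanced_turanPartSizes : IsBalanced (turanPartSizes n r) := by
  rintro x y hx hy
  simp only [turanPartSizes, Set.mem_ofPred_eq, Multiset.mem_map, mem_val, mem_range] at hx hy
  obtain ⟨i, hi, rfl⟩ := hx
  obtain ⟨j, hj, rfl⟩ := hy
  simp only [id, card_filter_mod_eq hi, card_filter_mod_eq hj]
  split_ifs <;> omega

theorem turanCount_eq_esymm (hr : 0 < r) (k : ℕ) :
    turanCount n r k = (turanPartSizes n r).esymm k := by
  have hgraph : SimpleGraph.turanGraph n r = (⊤ : SimpleGraph ℕ).comap fun v : Fin n ↦ v % r := rfl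
  have hcolor : ({v | v % r ∈ range r} : Finset (Fin n)) = univ := by
    simp [Nat.mod_lt _ hr]
  rw [turanCount, hgraph, cliqueCount_eq_card_cliqueFinsetOn_univ, ← hcolor,
    card_cliqueFinsetOn_comap_top, turanPartSizes]

end Turan

theorem exists_card_cliqueFinsetOn_le_esymm {V : Type*} [DecidableEq V] {G : SimpleGraph V}
    [DecidableRel G.Adj] {A : Finset V} {r : ℕ} (hA : G.CliqueFreeOn A (r + 1)) :
    ∃ t : Multiset ℕ, t.card = r ∧ t.sum = #A ∧ ∀ k, #(cliqueFinsetOn G A k) ≤ t.esymm k := by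
  induction r generalizing A with
  | zero =>
    obtain rfl : A = ∅ := eq_empty_of_forall_notMem fun a ha ↦
      hA (t := {a}) (by simpa using ha) (by simp)
    exact ⟨0, rfl, rfl, fun k ↦ (card_cliqueFinsetOn_empty k).le⟩
  | succ r ih =>
    refine ⟨turanPartSizes #A (r + 1), card_turanPartSizes, sum_turanPartSizes r.succ_pos,
      fun k ↦ ?_⟩
    cases k with
    | zero => rw [card_cliqueFinsetOn_zero, multiset_esymm_zero]
    | succ k =>
      rcases A.eq_empty_or_nonempty with rfl | hne
      · simp [cliqueFinsetOn_empty_succ]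
      obtain ⟨v, hv, hle⟩ := exists_card_cliqueFinsetOn_succ_le (G := G) hne k
      have hN : G.CliqueFreeOn ↑({w ∈ A | G.Adj v w} : Finset V) (r + 1) := by
        rw [coe_filter]
        exact hA.of_succ G hv
      obtain ⟨t, hcard, hsum, ht⟩ := ih hN
      calc #(cliqueFinsetOn G A (k + 1))
        _ ≤ t.esymm (k + 1) + #{w ∈ A | ¬G.Adj v w} * t.esymm k := by grw [hle, ht, ht]
        _ = (#{w ∈ A | ¬G.Adj v w} ::ₘ t).esymm (k + 1) := (multiset_esymm_cons_succ ..).symm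
        _ ≤ (turanPartSizes #A (r + 1)).esymm (k + 1) := by
          refine isBalanced_turanPartSizes.esymm_le ?_ ?_ (k + 1)
          · rw [Multiset.card_cons, hcard, card_turanPartSizes]
          · rw [Multiset.sum_cons, hsum, sum_turanPartSizes r.succ_pos, add_comm,
              card_filter_add_card_filter_not]

theorem zykov_general {V : Type*} [Fintype V] {G : SimpleGraph V} {r : ℕ} (hr : 0 < r)
    (hG : G.CliqueFree (r + 1)) (k : ℕ) :
    cliqueCount G k ≤ turanCount (Fintype.card V) r k := by
  classical
  obtain ⟨t, hcard, hsum, ht⟩ :=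
    exists_card_cliqueFinsetOn_le_esymm (A := univ) hG.cliqueFreeOn
  rw [cliqueCount_eq_card_cliqueFinsetOn_univ, turanCount_eq_esymm hr]
  refine (ht k).trans (isBalanced_turanPartSizes.esymm_le ?_ ?_ k)
  · rw [hcard, card_turanPartSizes]
  · rw [hsum, sum_turanPartSizes hr, card_univ]

/-- **Zykov's theorem.** For any graph `G` on `n` vertices with clique number at
most `r` and any `k ≥ 1`, the number of `k`-cliques of `G` is at most the number of
`k`-cliques of the Turán graph `T(n,r)`. -/
theorem zykov (n r : ℕ) (hn : 0 < n) (hr : 0 < r)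
    (G : SimpleGraph (Fin n)) (hG : G.CliqueFree (r + 1)) (k : ℕ) (hk : 1 ≤ k) :
    cliqueCount G k ≤ turanCount n r k := by
  simpa using zykov_general hr hG k
end

section
/- Let Δ be a simplicial complex and let u, v be distinct vertices of Δ such that {u, v} is not a face of Δ. Then for every j ≥ 1, f_j(Δ_{u→v}) = f_j(Δ) − f_{j-1}(link_Δ(u)) + f_{j-1}(link_Δ(v)). -/
/-- A (finite) simplicial complex on the vertex set `V`: a collection of subsets of `V`
closed under taking subsets and containing every singleton. -/
def IsComplex {V : Type*} [DecidableEq V] (Δ : Finset (Finset V)) : Prop :=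
  (∀ F ∈ Δ, ∀ G ⊆ F, G ∈ Δ) ∧ (∀ v : V, {v} ∈ Δ)

/-- `f_k(Δ)`: the number of faces of `Δ` of cardinality `k`. -/
def faceCount {V : Type*} [DecidableEq V] (Δ : Finset (Finset V)) (k : ℕ) : ℕ :=
  (Δ.filter fun F => F.card = k).card

/-- The link of a vertex `v` in `Δ`: all faces `F ∈ Δ` with `v ∉ F` and `F ∪ {v} ∈ Δ`. -/
def link {V : Type*} [DecidableEq V] (Δ : Finset (Finset V)) (v : V) :
    Finset (Finset V) :=
  Δ.filter fun F => v ∉ F ∧ insert v F ∈ Δ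

/-- The complex `Δ_{u→v}`: remove every face properly containing `{u}` and add the
face `F ∪ {u}` for every face `F` of `link_Δ(v)`. -/
def redirectComplex {V : Type*} [DecidableEq V] (Δ : Finset (Finset V)) (u v : V) :
    Finset (Finset V) :=
  (Δ.filter fun F => u ∉ F ∨ F = {u}) ∪ (link Δ v).image fun F => insert u F

/-!
Faces with `k + 1` elements split into those avoiding `u` and those containing `u`; erasing `u`
turns the latter into the `k`-element members of the link of `u`. Passing from `Δ` to `Δ_{u→v}`
keeps the faces avoiding `u` and replaces the link of `u` by the link of `v`.
-/

section

open Finset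

variable {V : Type*} [DecidableEq V]

theorem IsComplex.isLowerSet {Δ : Finset (Finset V)} (hΔ : IsComplex Δ) :
    IsLowerSet (Δ : Set (Finset V)) :=
  fun F G hGF hF ↦ hΔ.1 F hF G hGF

theorem faceCount_memberSubfamily_add_faceCount_nonMemberSubfamily (u : V)
    (𝒜 : Finset (Finset V)) (k : ℕ) :
    faceCount (𝒜.memberSubfamily u) k + faceCount (𝒜.nonMemberSubfamily u) (k + 1) =
      faceCount 𝒜 (k + 1) := by
  have hnonMember : nonMemberSubfamily u {F ∈ 𝒜 | #F = k + 1} =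
      {F ∈ 𝒜.nonMemberSubfamily u | #F = k + 1} :=
    filter_comm ..
  have hmember : memberSubfamily u {F ∈ 𝒜 | #F = k + 1} =
      {F ∈ 𝒜.memberSubfamily u | #F = k} := by
    ext F
    simp only [mem_memberSubfamily, mem_filter]
    constructor
    · rintro ⟨⟨hF, hcard⟩, hu⟩
      exact ⟨⟨hF, hu⟩, by simpa [hu] using hcard⟩
    · rintro ⟨⟨hF, hu⟩, hcard⟩
      exact ⟨⟨hF, by simpa [hu] using hcard⟩, hu⟩
  simp only [faceCount, ← hnonMember, ← hmember]
  exact card_memberSubfamily_add_card_nonMemberSubfamily u _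

theorem nonMemberSubfamily_redirectComplex (Δ : Finset (Finset V)) (u v : V) :
    (redirectComplex Δ u v).nonMemberSubfamily u = Δ.nonMemberSubfamily u := by
  ext F
  simp only [redirectComplex, mem_nonMemberSubfamily, mem_union, mem_filter, mem_image]
  constructor
  · rintro ⟨⟨hF, -⟩ | ⟨G, -, rfl⟩, hu⟩
    · exact ⟨hF, hu⟩
    · exact absurd (mem_insert_self u G) hu
  · rintro ⟨hF, hu⟩
    exact ⟨.inl ⟨hF, .inl hu⟩, hu⟩

variable {Δ : Finset (Finset V)} {u v : V}

theorem link_eq_memberSubfamily (hΔ : IsLowerSet (Δ : Set (Finset V))) (v : V) :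
    link Δ v = Δ.memberSubfamily v := by
  ext F
  simp only [link, mem_filter, mem_memberSubfamily]
  constructor
  · rintro ⟨-, hv, hF⟩
    exact ⟨hF, hv⟩
  · rintro ⟨hF, hv⟩
    exact ⟨hΔ (subset_insert v F) hF, hv, hF⟩

theorem notMem_of_mem_link (hΔ : IsLowerSet (Δ : Set (Finset V))) (huv : {u, v} ∉ Δ)
    {F : Finset V} (hF : F ∈ link Δ v) : u ∉ F := by
  intro hu
  have hsub : {u, v} ⊆ insert v F :=
    insert_subset (mem_insert_of_mem hu) (singleton_subset_iff.2 (mem_insert_self v F))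
  exact huv (hΔ hsub (mem_filter.1 hF).2.2)

theorem empty_mem_link (hΔ : IsLowerSet (Δ : Set (Finset V))) (hv : {v} ∈ Δ) :
    ∅ ∈ link Δ v :=
  mem_filter.2 ⟨hΔ (empty_subset {v}) hv, notMem_empty v, hv⟩

theorem memberSubfamily_redirectComplex (hΔ : IsLowerSet (Δ : Set (Finset V))) (hv : {v} ∈ Δ)
    (huv : {u, v} ∉ Δ) : (redirectComplex Δ u v).memberSubfamily u = link Δ v := by
  rw [redirectComplex, memberSubfamily_union,
    memberSubfamily_image_insert fun _ ↦ notMem_of_mem_link hΔ huv, union_eq_right]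
  intro F hF
  simp only [mem_memberSubfamily, mem_filter] at hF
  obtain ⟨⟨-, hu | hsingleton⟩, huF⟩ := hF
  · exact absurd (mem_insert_self u F) hu
  · have hempty : F = ∅ := by rw [← erase_insert huF, hsingleton, erase_singleton]
    exact hempty ▸ empty_mem_link hΔ hv

theorem faceCount_redirectComplex_general (hΔ : IsLowerSet (Δ : Set (Finset V))) (hv : {v} ∈ Δ)
    (huv : {u, v} ∉ Δ) (k : ℕ) :
    (faceCount (redirectComplex Δ u v) (k + 1) : ℤ) =
      faceCount Δ (k + 1) - faceCount (link Δ u) k + faceCount (link Δ v) k := by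
  have hcount :
      faceCount (link Δ u) k + faceCount (Δ.nonMemberSubfamily u) (k + 1) =
        faceCount Δ (k + 1) := by
    rw [link_eq_memberSubfamily hΔ, faceCount_memberSubfamily_add_faceCount_nonMemberSubfamily]
  have hcount_redirect :
      faceCount (link Δ v) k + faceCount (Δ.nonMemberSubfamily u) (k + 1) =
        faceCount (redirectComplex Δ u v) (k + 1) := by
    rw [← memberSubfamily_redirectComplex hΔ hv huv, ← nonMemberSubfamily_redirectComplex Δ u v,
      faceCount_memberSubfamily_add_faceCount_nonMemberSubfamily]
  lia

end

/-- If `u, v` are distinct vertices of a simplicial complex `Δ` with `{u,v} ∉ Δ`,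
then for every `j ≥ 1` one has
`f_j(Δ_{u→v}) = f_j(Δ) − f_{j-1}(link_Δ(u)) + f_{j-1}(link_Δ(v))`. -/
theorem faceCount_redirectComplex {V : Type*} [Fintype V] [DecidableEq V]
    (Δ : Finset (Finset V)) (hΔ : IsComplex Δ) (u v : V) (huv : u ≠ v)
    (hmem : ({u, v} : Finset V) ∉ Δ) (j : ℕ) (hj : 1 ≤ j) :
    (faceCount (redirectComplex Δ u v) j : ℤ) =
      (faceCount Δ j : ℤ) - faceCount (link Δ u) (j - 1) +
        faceCount (link Δ v) (j - 1) := by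
  obtain ⟨k, rfl⟩ := Nat.exists_eq_add_of_le' hj
  exact faceCount_redirectComplex_general hΔ.isLowerSet (hΔ.2 v) hmem k
end
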